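/- arXiv:1010.3877 — 10 statements merged into one kernel-verified Lean document; each statement's English description precedes it below -/
import Mathlib

section
/- Let S be an AG-groupoid, B a bi-ideal of S, and f a fuzzy subset of S such that f(x) = 0 for all x ∈ S \ B and f(x) ≥ 0.5 for all x ∈ B. Then: (i) for all x, y, z ∈ S and t, r ∈ (0,1], if f(x) + t > 1 and f(y) + r > 1 then f(xy) ≥ min(t,r) or f(xy) + min(t,r) > 1, and if f(x) + t > 1 and f(z) + r > 1 then f((xy)z) ≥ min(t,r) or f((xy)z) + min(t,r) > 1 (that is, f is a (q,∈∨q)-fuzzy bi-ideal of S); (ii) f is an (∈,∈∨q)-fuzzy bi-ideal of S. -/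
/-- An AG-groupoid: a magma satisfying the left invertive law `(ab)c = (cb)a`. -/
def LeftInvertive (S : Type*) [Mul S] : Prop := ∀ a b c : S, a * b * c = c * b * a

/-- A fuzzy subset: a function into `[0,1]`. -/
def IsFuzzy {S : Type*} (f : S → ℝ) : Prop := ∀ x, 0 ≤ f x ∧ f x ≤ 1

/-- if `B` is a bi-ideal of `S` and `f` vanishes off `B` and is `≥ 0.5` on `B`,
then (i) `f` is a `(q,∈∨q)`-fuzzy bi-ideal of `S`, and (ii) `f` is an `(∈,∈∨q)`-fuzzy
bi-ideal of `S`. -/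
theorem fuzzy_biIdeal_of_biIdeal {S : Type*} [Mul S] (hS : LeftInvertive S)
    (B : Set S) (hBne : B.Nonempty)
    (hBB : ∀ x ∈ B, ∀ y ∈ B, x * y ∈ B)
    (hBSB : ∀ x ∈ B, ∀ s : S, ∀ z ∈ B, x * s * z ∈ B)
    (f : S → ℝ) (hf : IsFuzzy f)
    (h0 : ∀ x ∉ B, f x = 0) (h5 : ∀ x ∈ B, (1 / 2 : ℝ) ≤ f x) :
    ((∀ (x y : S) (t r : ℝ), 0 < t → t ≤ 1 → 0 < r → r ≤ 1 →
        1 < f x + t → 1 < f y + r →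
        (min t r ≤ f (x * y) ∨ 1 < f (x * y) + min t r)) ∧
      (∀ (x y z : S) (t r : ℝ), 0 < t → t ≤ 1 → 0 < r → r ≤ 1 →
        1 < f x + t → 1 < f z + r →
        (min t r ≤ f (x * y * z) ∨ 1 < f (x * y * z) + min t r))) ∧
    ((∀ x y : S, min (min (f x) (f y)) (1 / 2) ≤ f (x * y)) ∧
      (∀ x y z : S, min (min (f x) (f z)) (1 / 2) ≤ f (x * y * z))) := by
  have mem : ∀ (x : S) (t : ℝ), t ≤ 1 → 1 < f x + t → x ∈ B := by
    intro x t ht h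
    by_contra hx
    rw [h0 x hx] at h
    linarith
  have key : ∀ (w : S) (m : ℝ), w ∈ B → m ≤ f w ∨ 1 < f w + m := by
    intro w m hw
    have := h5 w hw
    by_cases h : m ≤ f w
    · exact Or.inl h
    · right
      push Not at h
      linarith
  have key2 : ∀ x z w : S, (x ∈ B → z ∈ B → w ∈ B) →
      min (min (f x) (f z)) (1 / 2) ≤ f w := by
    intro x z w h
    by_cases hx : x ∈ B
    · by_cases hz : z ∈ B
      · exact (min_le_right _ _).trans (h5 w (h hx hz))
      · exact (min_le_left _ _).trans ((min_le_right _ _).trans ((h0 z hz).le.trans (hf w).1))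
    · exact (min_le_left _ _).trans ((min_le_left _ _).trans ((h0 x hx).le.trans (hf w).1))
  refine ⟨⟨?_, ?_⟩, ?_, ?_⟩
  · intro x y t r _ ht _ hr h1 h2
    exact key _ _ (hBB x (mem x t ht h1) y (mem y r hr h2))
  · intro x y z t r _ ht _ hr h1 h2
    exact key _ _ (hBSB x (mem x t ht h1) y z (mem z r hr h2))
  · intro x y
    exact key2 x y _ fun hx hy => hBB x hx y hy
  · intro x y z
    exact key2 x z _ fun hx hz => hBSB x hx y z hz
end

section
/- Let S be an AG-groupoid and f an (∈,∈∨q)-fuzzy bi-ideal of S. Then (f ∘₀.₅ 1) ∘₀.₅ f ⊆ f, i.e., ((f ∘₀.₅ 1) ∘₀.₅ f)(a) ≤ f(a) for all a ∈ S. -/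
/-- An `(∈,∈∨q)`-fuzzy bi-ideal of an AG-groupoid. -/
def FuzzyBiIdealQ {S : Type*} [Mul S] (f : S → ℝ) : Prop :=
  (∀ x y : S, min (min (f x) (f y)) (1 / 2) ≤ f (x * y)) ∧
  (∀ x y z : S, min (min (f x) (f z)) (1 / 2) ≤ f (x * y * z))

/-- The `0.5`-product of fuzzy subsets. -/
noncomputable def prod05 {S : Type*} [Mul S] (f g : S → ℝ) (a : S) : ℝ :=
  sSup {v : ℝ | ∃ b c : S, a = b * c ∧ v = min (min (f b) (g c)) (1 / 2)}

/-- The constant fuzzy subset `1`. -/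
def fuzzyOne (S : Type*) : S → ℝ := fun _ => 1

/-- if `f` is an `(∈,∈∨q)`-fuzzy bi-ideal of `S`, then
`(f ∘₀.₅ 1) ∘₀.₅ f ⊆ f`. -/
theorem prod05_one_prod05_le {S : Type*} [Mul S] (hS : LeftInvertive S)
    (f : S → ℝ) (hf : IsFuzzy f) (hbi : FuzzyBiIdealQ f) :
    ∀ a : S, prod05 (prod05 f (fuzzyOne S)) f a ≤ f a := by
  intro a
  have h0 := (hf a).1
  refine Real.sSup_le ?_ h0
  rintro v ⟨b, c, rfl, rfl⟩
  by_contra hlt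
  rw [not_le, lt_min_iff, lt_min_iff] at hlt
  obtain ⟨⟨h1, h2⟩, h3⟩ := hlt
  have h4 : prod05 f (fuzzyOne S) b ≤ f (b * c) := by
    refine Real.sSup_le ?_ h0
    rintro v ⟨x, y, rfl, rfl⟩
    by_contra h5
    rw [not_le, lt_min_iff, lt_min_iff] at h5
    have h6 := hbi.2 x y c
    exact absurd h6 (not_le.mpr (lt_min (lt_min h5.1.1 h2) h3))
  exact absurd h4 (not_le.mpr h1)
end

section
/- Let S be a regular AG-groupoid with a left identity e, and let f and g be (∈,∈∨q)-fuzzy bi-ideals of S. Then the 0.5-product f ∘₀.₅ g is also an (∈,∈∨q)-fuzzy bi-ideal of S. -/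
theorem prod05_lt_aux {S : Type*} [Mul S] (e : S) (he : ∀ x : S, e * x = x)
    (f g : S → ℝ) (a : S) (t : ℝ) (h : t < prod05 f g a) :
    ∃ b c, a = b * c ∧ t < f b ∧ t < g c ∧ t < 1 / 2 := by
  obtain ⟨v, ⟨b, c, h1, rfl⟩, h2⟩ := exists_lt_of_lt_csSup
    (by exact ⟨_, e, a, (he a).symm, rfl⟩) h
  simp only [lt_min_iff] at h2
  exact ⟨b, c, h1, h2.1.1, h2.1.2, h2.2⟩

theorem lt_prod05_aux {S : Type*} [Mul S]
    (f g : S → ℝ) (b c : S) (t : ℝ) (h1 : t < f b) (h2 : t < g c) (h3 : t < 1 / 2) :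
    t < prod05 f g (b * c) := by
  refine lt_of_lt_of_le (lt_min (lt_min h1 h2) h3) (le_csSup ⟨1 / 2, ?_⟩ ⟨b, c, rfl, rfl⟩)
  rintro v ⟨b, c, -, rfl⟩
  exact min_le_right _ _

theorem medial_aux {S : Type*} [Mul S] (hS : LeftInvertive S) (a b c d : S) :
    (a * b) * (c * d) = (a * c) * (b * d) := by
  rw [hS a b (c * d), hS c d b, hS (b * d) c a]

/-- if `S` is a regular AG-groupoid with a left identity `e` and `f`, `g` are
`(∈,∈∨q)`-fuzzy bi-ideals of `S`, then `f ∘₀.₅ g` is also an `(∈,∈∨q)`-fuzzy bi-ideal. -/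
theorem prod05_fuzzy_biIdealQ_of_regular {S : Type*} [Mul S] (hS : LeftInvertive S)
    (e : S) (he : ∀ x : S, e * x = x)
    (hreg : ∀ a : S, ∃ x : S, a = a * x * a)
    (f g : S → ℝ) (hf : IsFuzzy f) (hg : IsFuzzy g)
    (hfb : FuzzyBiIdealQ f) (hgb : FuzzyBiIdealQ g) :
    FuzzyBiIdealQ (prod05 f g) := by
  constructor
  · intro x y
    refine le_of_forall_lt fun t ht => ?_
    simp only [lt_min_iff] at ht
    obtain ⟨⟨hx, hy⟩, h5⟩ := ht
    obtain ⟨b, c, rfl, h1, h2, -⟩ := prod05_lt_aux e he f g x t hx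
    obtain ⟨b', c', rfl, h3, h4, -⟩ := prod05_lt_aux e he f g y t hy
    rw [medial_aux hS]
    exact lt_prod05_aux f g _ _ t (lt_of_lt_of_le (lt_min (lt_min h1 h3) h5) (hfb.1 _ _))
      (lt_of_lt_of_le (lt_min (lt_min h2 h4) h5) (hgb.1 _ _)) h5
  · intro x y z
    refine le_of_forall_lt fun t ht => ?_
    simp only [lt_min_iff] at ht
    obtain ⟨⟨hx, hy⟩, h5⟩ := ht
    obtain ⟨b, c, rfl, h1, h2, -⟩ := prod05_lt_aux e he f g x t hx
    obtain ⟨b', c', rfl, h3, h4, -⟩ := prod05_lt_aux e he f g z t hy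
    rw [← he y, medial_aux hS b c e y, medial_aux hS]
    exact lt_prod05_aux f g _ _ t (lt_of_lt_of_le (lt_min (lt_min h1 h3) h5) (hfb.2 _ _ _))
      (lt_of_lt_of_le (lt_min (lt_min h2 h4) h5) (hgb.2 _ _ _)) h5
end

section
/- Let S be an AG-groupoid with a left identity e that is both regular and intra-regular. Then for all (∈,∈∨q)-fuzzy bi-ideals f and g of S, f ∩₀.₅ g = (f ∘₀.₅ g) ∩₀.₅ (g ∘₀.₅ f). -/
/-- The `0.5`-intersection of fuzzy subsets. -/
noncomputable def inter05 {S : Type*} (f g : S → ℝ) : S → ℝ :=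
  fun a => min (min (f a) (g a)) (1 / 2)

/-- if `S` is a regular and intra-regular AG-groupoid with a left identity
`e`, then `f ∩₀.₅ g = (f ∘₀.₅ g) ∩₀.₅ (g ∘₀.₅ f)` for all `(∈,∈∨q)`-fuzzy bi-ideals
`f` and `g` of `S`. -/
theorem inter05_eq_prod05_inter05_of_regular_intraRegular {S : Type*} [Mul S]
    (hS : LeftInvertive S) (e : S) (he : ∀ x : S, e * x = x)
    (hreg : ∀ a : S, ∃ x : S, a = a * x * a)
    (hintra : ∀ a : S, ∃ x y : S, a = x * (a * a) * y) :
    ∀ f g : S → ℝ, IsFuzzy f → IsFuzzy g → FuzzyBiIdealQ f → FuzzyBiIdealQ g →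
      inter05 f g = inter05 (prod05 f g) (prod05 g f) := by
  have med : ∀ a b c d : S, (a * b) * (c * d) = (a * c) * (b * d) := by
    intro a b c d
    rw [hS a b (c * d), hS c d b, hS (b * d) c a]
  have lc : ∀ a b c : S, a * (b * c) = b * (a * c) := by
    intro a b c
    have h := med e a b c
    rwa [he, he] at h
  have pm : ∀ a b c d : S, (a * b) * (c * d) = (d * b) * (c * a) := by
    intro a b c d
    rw [lc (a * b) c d, hS a b d, lc c (d * b) a]
  have L1 : ∀ x a : S, ∃ w, x * a = a * w * a := by
    intro x a
    obtain ⟨s, hs⟩ := hreg a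
    refine ⟨x * e * s, ?_⟩
    rw [lc a (x * e) s, med x e a s, he]
    rw [← hS a s (x * a), lc (a * s) x a, ← hs]
  have L3 : ∀ t r a : S, ∃ w, t * (r * a) = w * a := by
    intro t r a
    refine ⟨t * e * r, ?_⟩
    have h := pm e t r a
    rw [he] at h
    rw [hS (t * e) r a, med a r t e, ← h]
  have L2 : ∀ a x : S, ∃ t, a * x = t * a := by
    intro a x
    obtain ⟨p, q, h⟩ := hintra a
    obtain ⟨t1, h1⟩ := L3 p a a
    obtain ⟨t2, h2⟩ := L3 q t1 a
    obtain ⟨t3, h3⟩ := L3 (x * e) t2 a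
    refine ⟨t3, ?_⟩
    have hae : a * e = t2 * a := by
      rw [← h2, ← h1]
      conv_lhs => rw [h]
      rw [hS, he]
    rw [← h3, ← hae, pm x e a e, he, he]
  have key : ∀ f : S → ℝ, FuzzyBiIdealQ f → ∀ x a, min (f a) (1 / 2) ≤ f (x * a) := by
    intro f hf x a
    obtain ⟨w, hw⟩ := L1 x a
    have := hf.2 a w a
    rwa [min_self, ← hw] at this
  have key' : ∀ f : S → ℝ, FuzzyBiIdealQ f → ∀ a x, min (f a) (1 / 2) ≤ f (a * x) := by
    intro f hf a x
    obtain ⟨w, hw⟩ := L2 a x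
    rw [hw]
    exact key f hf w a
  have up : ∀ f g : S → ℝ, IsFuzzy f → IsFuzzy g → FuzzyBiIdealQ f → FuzzyBiIdealQ g →
      ∀ a, prod05 f g a = min (min (f a) (g a)) (1 / 2) := by
    intro f g _ _ hf hg a
    obtain ⟨s, hs⟩ := hreg a
    have hb : ∀ v ∈ {v : ℝ | ∃ b c : S, a = b * c ∧ v = min (min (f b) (g c)) (1 / 2)},
        v ≤ min (min (f a) (g a)) (1 / 2) := by
      rintro v ⟨b, c, rfl, rfl⟩
      refine le_min (le_min ?_ ?_) (min_le_right _ _)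
      · exact (min_le_min_right _ (min_le_left _ _)).trans (key' f hf b c)
      · exact (min_le_min_right _ (min_le_right _ _)).trans (key g hg b c)
    apply le_antisymm
    · exact csSup_le ⟨_, a * s, a, hs, rfl⟩ hb
    · refine le_trans ?_ (le_csSup ⟨_, hb⟩ ⟨a * s, a, hs, rfl⟩)
      refine le_min (le_min ?_ ?_) (min_le_right _ _)
      · exact (min_le_min_right _ (min_le_left _ _)).trans (key' f hf a s)
      · exact (min_le_left _ _).trans (min_le_right _ _)
  intro f g hf hg hf' hg'
  funext a
  simp only [inter05]
  rw [up f g hf hg hf' hg', up g f hg hf hg' hf', min_comm (g a) (f a), min_self,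
    min_assoc (min (f a) (g a)), min_self]
end

section
/- Let k ∈ [0,1) and let S be a weakly regular AG-groupoid with a left identity e. If f is an (∈,∈∨q_k)-fuzzy left ideal of S and g is an (∈,∈∨q_k)-fuzzy right ideal of S, then the product f ∘ g is an (∈,∈∨q_k)-fuzzy two-sided ideal of S, i.e., (f ∘ g)(ab) ≥ min((f ∘ g)(b), (1−k)/2) and (f ∘ g)(ab) ≥ min((f ∘ g)(a), (1−k)/2) for all a, b ∈ S. -/
/-- A weakly regular AG-groupoid: each `a` satisfies `a = (ax)(ay)` for some `x, y`. -/
def WeaklyRegular (S : Type*) [Mul S] : Prop := ∀ a : S, ∃ x y : S, a = a * x * (a * y)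

/-- The product of fuzzy subsets: `(f ∘ g)(a)` is the supremum of `min(f b, g c)` over
factorizations `a = b * c` (the empty supremum in `ℝ` is `0`). -/
noncomputable def fuzzyProd {S : Type*} [Mul S] (f g : S → ℝ) (a : S) : ℝ :=
  sSup {v : ℝ | ∃ b c : S, a = b * c ∧ v = min (f b) (g c)}

/-- An `(∈,∈∨q_k)`-fuzzy left ideal of an AG-groupoid. -/
def FuzzyLeftIdealK {S : Type*} [Mul S] (k : ℝ) (f : S → ℝ) : Prop :=
  ∀ x y : S, min (f y) ((1 - k) / 2) ≤ f (x * y)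

/-- An `(∈,∈∨q_k)`-fuzzy right ideal of an AG-groupoid. -/
def FuzzyRightIdealK {S : Type*} [Mul S] (k : ℝ) (f : S → ℝ) : Prop :=
  ∀ x y : S, min (f x) ((1 - k) / 2) ≤ f (x * y)

/-- An `(∈,∈∨q_k)`-fuzzy generalized bi-ideal of an AG-groupoid. -/
def FuzzyGenBiIdealK {S : Type*} [Mul S] (k : ℝ) (f : S → ℝ) : Prop :=
  ∀ x y z : S, min (min (f x) (f z)) ((1 - k) / 2) ≤ f (x * y * z)

/-- An `(∈,∈∨q_k)`-fuzzy bi-ideal of an AG-groupoid. -/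
def FuzzyBiIdealK {S : Type*} [Mul S] (k : ℝ) (f : S → ℝ) : Prop :=
  (∀ x y : S, min (min (f x) (f y)) ((1 - k) / 2) ≤ f (x * y)) ∧
  FuzzyGenBiIdealK k f

/-- An `(∈,∈∨q_k)`-fuzzy quasi-ideal of an AG-groupoid. -/
def FuzzyQuasiIdealK {S : Type*} [Mul S] (k : ℝ) (f : S → ℝ) : Prop :=
  ∀ x : S,
    min (min (fuzzyProd f (fuzzyOne S) x) (fuzzyProd (fuzzyOne S) f x)) ((1 - k) / 2) ≤ f x

/-- `f_k`. -/
noncomputable def subK {S : Type*} (k : ℝ) (f : S → ℝ) : S → ℝ := fun a => min (f a) ((1 - k) / 2)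

/-- `f ∧_k g`. -/
noncomputable def andK {S : Type*} (k : ℝ) (f g : S → ℝ) : S → ℝ :=
  fun a => min (min (f a) (g a)) ((1 - k) / 2)

/-- `f ∘_k g`. -/
noncomputable def prodK {S : Type*} [Mul S] (k : ℝ) (f g : S → ℝ) : S → ℝ :=
  fun a => min (fuzzyProd f g a) ((1 - k) / 2)

/-- A regular AG-groupoid: each `a` satisfies `a = (ax)a` for some `x`. -/
def RegularAG (S : Type*) [Mul S] : Prop := ∀ a : S, ∃ x : S, a = a * x * a

/-- An intra-regular AG-groupoid: each `a` satisfies `a = (x(aa))y` for some `x, y`. -/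
def IntraRegularAG (S : Type*) [Mul S] : Prop :=
  ∀ a : S, ∃ x y : S, a = x * (a * a) * y

/-- in a weakly regular AG-groupoid with left identity, the product of an
`(∈,∈∨q_k)`-fuzzy left ideal and an `(∈,∈∨q_k)`-fuzzy right ideal is an
`(∈,∈∨q_k)`-fuzzy two-sided ideal. -/
theorem fuzzyProd_left_right_two_sided {S : Type*} [Mul S] (hS : LeftInvertive S)
    (k : ℝ) (hk0 : 0 ≤ k) (hk1 : k < 1)
    (e : S) (he : ∀ x : S, e * x = x) (hwr : WeaklyRegular S)
    (f g : S → ℝ) (hf : IsFuzzy f) (hg : IsFuzzy g)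
    (hfl : FuzzyLeftIdealK k f) (hgr : FuzzyRightIdealK k g) :
    FuzzyLeftIdealK k (fuzzyProd f g) ∧ FuzzyRightIdealK k (fuzzyProd f g) := by
  have med : ∀ a b c d : S, a * b * (c * d) = a * c * (b * d) := by
    intro a b c d
    rw [hS a b (c * d), hS c d b, hS (b * d) c a]
  have lc : ∀ a b c : S, a * (b * c) = b * (a * c) := by
    intro a b c
    have h := med e a b c
    rwa [he, he] at h
  have pm : ∀ a b c d : S, a * b * (c * d) = d * b * (c * a) := by
    intro a b c d
    rw [lc (a * b) c d, hS a b d, lc c (d * b) a]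
  have gl : ∀ x c : S, min (g c) ((1 - k) / 2) ≤ g (x * c) := by
    intro x c
    have h1 : x * c = c * x * e := by rw [hS c x e, he]
    rw [h1]
    exact le_trans (le_min (hgr c x) (min_le_right _ _)) (hgr (c * x) e)
  have fr : ∀ b x : S, min (f b) ((1 - k) / 2) ≤ f (b * x) := by
    intro b x
    obtain ⟨s, t, hb⟩ := hwr b
    have h1 : b * x = s * (x * t) * (b * b) := by
      calc b * x = b * s * (b * t) * x := by rw [← hb]
        _ = x * (b * t) * (b * s) := hS _ _ _
        _ = b * (x * t) * (b * s) := by rw [lc x b t]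
        _ = _ := pm _ _ _ _
    rw [h1]
    exact le_trans (le_min (hfl b b) (min_le_right _ _)) (hfl _ (b * b))
  have hle : ∀ b c : S, min (f b) (g c) ≤ fuzzyProd f g (b * c) := by
    intro b c
    refine le_csSup ⟨1, ?_⟩ ⟨b, c, rfl, rfl⟩
    rintro v ⟨b', c', -, rfl⟩
    exact le_trans (min_le_left _ _) (hf b').2
  have h0 : ∀ a, 0 ≤ fuzzyProd f g a := by
    intro a
    apply Real.sSup_nonneg
    rintro v ⟨b', c', -, rfl⟩
    exact le_min (hf b').1 (hg c').1
  -- reduction from the supremum to single factorizations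
  have key : ∀ a z : S, (∀ b c : S, a = b * c →
      min (min (f b) (g c)) ((1 - k) / 2) ≤ fuzzyProd f g z) →
      min (fuzzyProd f g a) ((1 - k) / 2) ≤ fuzzyProd f g z := by
    intro a z h
    by_contra hcon
    rw [not_le, lt_min_iff] at hcon
    have : fuzzyProd f g a ≤ fuzzyProd f g z := by
      refine Real.sSup_le ?_ (h0 z)
      rintro v ⟨b, c, hbc, rfl⟩
      rcases min_le_iff.1 (h b c hbc) with h | h
      · exact h
      · exact absurd h (not_le.2 hcon.2)
    exact absurd this (not_le.2 hcon.1)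
  constructor
  · intro x y
    refine key y _ ?_
    rintro b c rfl
    rw [lc x b c]
    refine le_trans (le_min ?_ ?_) (hle b (x * c))
    · exact (min_le_left _ _).trans (min_le_left _ _)
    · exact le_trans (min_le_min_right _ (min_le_right _ _)) (gl x c)
  · intro x y
    refine key x _ ?_
    rintro b c rfl
    have h1 : b * c * y = b * e * (c * y) := by
      rw [← med b c e y, he]
    rw [h1]
    refine le_trans (le_min ?_ ?_) (hle (b * e) (c * y))
    · exact le_trans (min_le_min_right _ (min_le_left _ _)) (fr b e)
    · exact le_trans (min_le_min_right _ (min_le_right _ _)) (hgr c y)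
end

section
/- Let k ∈ [0,1) and let S be a weakly regular AG-groupoid with a left identity e. Then every (∈,∈∨q_k)-fuzzy generalized bi-ideal of S is an (∈,∈∨q_k)-fuzzy bi-ideal of S. -/
/-- in a weakly regular AG-groupoid with left identity, every
`(∈,∈∨q_k)`-fuzzy generalized bi-ideal is an `(∈,∈∨q_k)`-fuzzy bi-ideal. -/
theorem genBiIdealK_is_biIdealK {S : Type*} [Mul S] (hS : LeftInvertive S)
    (k : ℝ) (hk0 : 0 ≤ k) (hk1 : k < 1)
    (e : S) (he : ∀ x : S, e * x = x) (hwr : WeaklyRegular S) :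
    ∀ f : S → ℝ, IsFuzzy f → FuzzyGenBiIdealK k f → FuzzyBiIdealK k f := by
  intro f _ hf
  have medial : ∀ a b c d : S, a * b * (c * d) = a * c * (b * d) := fun a b c d => by
    rw [hS a b (c * d), hS c d b, hS (b * d) c a]
  have swap : ∀ a b c : S, a * (b * c) = b * (a * c) := fun a b c => by
    have h := medial e a b c
    rwa [he, he] at h
  refine ⟨fun a b => ?_, hf⟩
  obtain ⟨x, y, hxy⟩ := hwr a
  have h : a = a * (a * x * y) := hxy.trans (swap _ _ _)
  have h2 := hf a (a * x * y) b
  rwa [← h] at h2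
end

section
/- Let k ∈ [0,1) and let S be a weakly regular AG-groupoid with a left identity e. Then every (∈,∈∨q_k)-fuzzy quasi-ideal of S is an (∈,∈∨q_k)-fuzzy bi-ideal of S. -/
/-- in a weakly regular AG-groupoid with left identity, every
`(∈,∈∨q_k)`-fuzzy quasi-ideal is an `(∈,∈∨q_k)`-fuzzy bi-ideal. -/
theorem quasiIdealK_is_biIdealK {S : Type*} [Mul S] (hS : LeftInvertive S)
    (k : ℝ) (hk0 : 0 ≤ k) (hk1 : k < 1)
    (e : S) (he : ∀ x : S, e * x = x) (hwr : WeaklyRegular S) :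
    ∀ f : S → ℝ, IsFuzzy f → FuzzyQuasiIdealK k f → FuzzyBiIdealK k f := by
  intro f hf hq
  have medial : ∀ a b c d : S, a * b * (c * d) = a * c * (b * d) := by
    intro a b c d
    rw [hS a b (c * d), hS c d b, hS (b * d) c a]
  have swap : ∀ a b c : S, a * (b * c) = b * (a * c) := by
    intro a b c
    have h := medial e a b c
    rwa [he, he] at h
  have hl : ∀ x w : S, f x ≤ fuzzyProd f (fuzzyOne S) (x * w) := by
    intro x w
    apply le_csSup
    · refine ⟨1, ?_⟩
      rintro v ⟨b, c, -, rfl⟩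
      exact min_le_right _ _
    · exact ⟨x, w, rfl, (min_eq_left (hf x).2).symm⟩
  have hr : ∀ w x : S, f x ≤ fuzzyProd (fuzzyOne S) f (w * x) := by
    intro w x
    apply le_csSup
    · refine ⟨1, ?_⟩
      rintro v ⟨b, c, -, rfl⟩
      exact min_le_left _ _
    · exact ⟨w, x, rfl, (min_eq_right (hf x).2).symm⟩
  refine ⟨fun x y => ?_, fun x y z => ?_⟩
  · exact le_trans (min_le_min_right _ (min_le_min (hl x y) (hr x y))) (hq (x * y))
  · obtain ⟨a, b, hx⟩ := hwr x
    have key : x * y * z = x * (z * y * (x * a * b)) := by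
      rw [swap (x * a) x b] at hx
      rw [hS x y z, swap x (z * y), ← hx]
    have h1 := hl x (z * y * (x * a * b))
    rw [← key] at h1
    exact le_trans (min_le_min_right _ (min_le_min h1 (hr (x * y) z))) (hq (x * y * z))
end

section
/- Let k ∈ [0,1) and let S be a weakly regular AG-groupoid with a left identity e. Then S is regular if and only if f ∧_k g = f ∘_k g for every (∈,∈∨q_k)-fuzzy right ideal f and every (∈,∈∨q_k)-fuzzy left ideal g of S. -/
/-- a weakly regular AG-groupoid with left identity is regular iff
`f ∧_k g = f ∘_k g` for every `(∈,∈∨q_k)`-fuzzy right ideal `f` and every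
`(∈,∈∨q_k)`-fuzzy left ideal `g`. -/
theorem regular_iff_andK_eq_prodK {S : Type*} [Mul S] (hS : LeftInvertive S)
    (k : ℝ) (hk0 : 0 ≤ k) (hk1 : k < 1)
    (e : S) (he : ∀ x : S, e * x = x) (hwr : WeaklyRegular S) :
    RegularAG S ↔
      ∀ f g : S → ℝ, IsFuzzy f → IsFuzzy g →
        FuzzyRightIdealK k f → FuzzyLeftIdealK k g → andK k f g = prodK k f g := by
  classical
  have hS' : ∀ a b c : S, a * b * c = c * b * a := hS
  have med : ∀ a b c d : S, (a * b) * (c * d) = (a * c) * (b * d) := by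
    intro a b c d
    rw [hS' a b (c * d), hS' c d b, hS' (b * d) c a]
  have lc : ∀ a b c : S, a * (b * c) = b * (a * c) := by
    intro a b c
    calc a * (b * c) = (e * a) * (b * c) := by rw [he]
      _ = (e * b) * (a * c) := med _ _ _ _
      _ = b * (a * c) := by rw [he]
  have para : ∀ a b c d : S, (a * b) * (c * d) = (d * b) * (c * a) := by
    intro a b c d
    rw [lc (a * b) c d, hS' a b d, lc c (d * b) a]
  have hK : 0 < (1 - k) / 2 := by linarith
  constructor
  · intro hreg f g hf hg hfr hgl
    funext a
    have hbdd : BddAbove {v : ℝ | ∃ b c : S, a = b * c ∧ v = min (f b) (g c)} := by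
      refine ⟨1, ?_⟩
      rintro v ⟨b, c, -, rfl⟩
      exact (min_le_left _ _).trans (hf b).2
    unfold andK prodK fuzzyProd
    apply le_antisymm
    · obtain ⟨x, hx⟩ := hreg a
      refine le_min ?_ (min_le_right _ _)
      refine le_trans ?_ (le_csSup hbdd ⟨a * x, a, hx, rfl⟩)
      have h1 := hfr a x
      refine le_min (le_trans ?_ h1) ((min_le_left _ _).trans (min_le_right _ _))
      exact min_le_min (min_le_left _ _) le_rfl
    · refine le_min ?_ (min_le_right _ _)
      by_contra hcon
      rw [not_le, lt_min_iff] at hcon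
      obtain ⟨h1, h2⟩ := hcon
      have hne : ({v : ℝ | ∃ b c : S, a = b * c ∧ v = min (f b) (g c)}).Nonempty :=
        ⟨_, e, a, (he a).symm, rfl⟩
      obtain ⟨v, ⟨b, c, hbc, rfl⟩, hv⟩ := exists_lt_of_lt_csSup hne h1
      have h3 := hfr b c
      have h4 := hgl b c
      rw [← hbc] at h3 h4
      rw [lt_min_iff] at hv
      have h5 := lt_of_lt_of_le (lt_min hv.1 h2) h3
      have h6 := lt_of_lt_of_le (lt_min hv.2 h2) h4
      exact absurd (lt_min h5 h6) (lt_irrefl _)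
  · intro h a
    obtain ⟨u, v, huv⟩ := hwr a
    -- `a = a * t`
    have ht : a = a * (a * u * v) := by rw [lc a (a * u) v]; exact huv
    set t := a * u * v with htdef
    have hfin : ∀ x y : S, a = (a * x) * (y * a) → ∃ z : S, a = a * z * a := by
      intro x y hxy
      refine ⟨(y * e) * x, ?_⟩
      calc a = (a * x) * (y * a) := hxy
        _ = ((y * a) * x) * a := hS' _ _ _
        _ = ((y * a) * (e * x)) * a := by rw [he]
        _ = ((y * e) * (a * x)) * a := by rw [med y a e x]
        _ = (a * ((y * e) * x)) * a := by rw [lc (y * e) a x]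
    let f : S → ℝ := fun s => if ∃ x, s = a * x then 1 else 0
    let g : S → ℝ := fun s => if ∃ y, s = y * a then 1 else 0
    have hf : IsFuzzy f := by
      intro s; simp only [f]; split_ifs <;> norm_num
    have hg : IsFuzzy g := by
      intro s; simp only [g]; split_ifs <;> norm_num
    have hfr : FuzzyRightIdealK k f := by
      intro s y
      by_cases hs : ∃ x, s = a * x
      · have : f (s * y) = 1 := by
          apply if_pos
          obtain ⟨x, rfl⟩ := hs
          refine ⟨(y * x) * t, ?_⟩
          rw [lc a (y * x) t, ← ht, hS']
        rw [this]
        exact (min_le_left _ _).trans (hf s).2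
      · have : f s = 0 := if_neg hs
        rw [this]
        exact (min_le_left _ _).trans (hf _).1
    have hgl : FuzzyLeftIdealK k g := by
      intro y s
      by_cases hs : ∃ x, s = x * a
      · have : g (y * s) = 1 := by
          apply if_pos
          obtain ⟨x, rfl⟩ := hs
          refine ⟨(y * e) * x, ?_⟩
          calc y * (x * a) = (e * y) * (x * a) := by rw [he]
            _ = (a * y) * (x * e) := para _ _ _ _
            _ = ((x * e) * y) * a := hS' _ _ _
            _ = ((y * e) * x) * a := by rw [hS' x e y]
        rw [this]
        exact (min_le_left _ _).trans (hg s).2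
      · have : g s = 0 := if_neg hs
        rw [this]
        exact (min_le_left _ _).trans (hg _).1
    have hfa : f a = 1 := if_pos ⟨t, ht⟩
    have hga : g a = 1 := if_pos ⟨e, (he a).symm⟩
    have key := congrFun (h f g hf hg hfr hgl) a
    unfold andK prodK fuzzyProd at key
    rw [hfa, hga] at key
    have hpos : (0 : ℝ) < min (min 1 1) ((1 - k) / 2) := lt_min (by norm_num) hK
    rw [key, lt_min_iff] at hpos
    have hne : ({v : ℝ | ∃ b c : S, a = b * c ∧ v = min (f b) (g c)}).Nonempty :=
      ⟨_, e, a, (he a).symm, rfl⟩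
    obtain ⟨w, ⟨b, c, hbc, rfl⟩, hw⟩ := exists_lt_of_lt_csSup hne hpos.1
    rw [lt_min_iff] at hw
    have hb : ∃ x, b = a * x := by
      by_contra hb
      have : f b = 0 := if_neg hb
      linarith [hw.1]
    have hc : ∃ y, c = y * a := by
      by_contra hc
      have : g c = 0 := if_neg hc
      linarith [hw.2]
    obtain ⟨x, rfl⟩ := hb
    obtain ⟨y, rfl⟩ := hc
    exact hfin x y hbc
end

section
/- Let k ∈ [0,1) and let S be a weakly regular AG-groupoid with a left identity e. Then the following conditions are equivalent: (i) S is regular; (ii) f_k = (f ∘_k 1) ∘_k f for every (∈,∈∨q_k)-fuzzy generalized bi-ideal f of S; (iii) f_k = (f ∘_k 1) ∘_k f for every (∈,∈∨q_k)-fuzzy bi-ideal f of S; (iv) f_k = (f ∘_k 1) ∘_k f for every (∈,∈∨q_k)-fuzzy quasi-ideal f of S. -/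
section Helpers
variable {S : Type*} [Mul S]

theorem ag_medial (hS : LeftInvertive S) (a b c d : S) :
    a * b * (c * d) = a * c * (b * d) := by
  rw [hS a b (c * d), hS c d b, hS (b * d) c a]

theorem ag_swap (hS : LeftInvertive S) (e : S) (he : ∀ x : S, e * x = x) (a b c : S) :
    a * (b * c) = b * (a * c) := by
  have h := ag_medial hS e a b c
  rwa [he, he] at h

theorem ag_para (hS : LeftInvertive S) (e : S) (he : ∀ x : S, e * x = x) (a b c d : S) :
    a * b * (c * d) = d * c * (b * a) := by
  have h1 : c * d = d * c * e := by rw [hS d c e, he]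
  have h2 : a * b * e = b * a := by rw [hS a b e, he]
  rw [h1, ag_swap hS e he, h2]

/-- In a weakly regular AG-groupoid with left identity, `Sa ⊆ aS`. -/
theorem ag_left_right (hS : LeftInvertive S) (e : S) (he : ∀ x : S, e * x = x)
    (hwr : WeaklyRegular S) (s a : S) : ∃ w, s * a = a * w := by
  obtain ⟨x, y, h⟩ := hwr a
  rw [ag_medial hS] at h
  refine ⟨(x * y) * s * a, ?_⟩
  calc s * a = s * (a * a * (x * y)) := by rw [← h]
    _ = a * a * (s * (x * y)) := ag_swap hS e he _ _ _
    _ = (x * y) * s * (a * a) := ag_para hS e he _ _ _ _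
    _ = _ := ag_swap hS e he _ _ _

theorem ag_regular (hS : LeftInvertive S) (e : S) (he : ∀ x : S, e * x = x)
    (hwr : WeaklyRegular S) : RegularAG S := by
  intro a
  obtain ⟨x, y, h⟩ := hwr a
  rw [ag_medial hS, hS a a (x * y)] at h
  obtain ⟨w, hw⟩ := ag_left_right hS e he hwr (x * y) a
  exact ⟨w, by rw [← hw]; exact h⟩

theorem le_fuzzyProd {f g : S → ℝ} (hf : ∀ x, f x ≤ 1) (b c : S) :
    min (f b) (g c) ≤ fuzzyProd f g (b * c) := by
  refine le_csSup ⟨1, ?_⟩ ⟨b, c, rfl, rfl⟩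
  rintro v ⟨b', c', _, rfl⟩
  exact (min_le_left _ _).trans (hf b')

theorem fuzzyProd_lt {f g : S → ℝ} {a : S} {r : ℝ} (hr : 0 ≤ r) (h : r < fuzzyProd f g a) :
    ∃ b c, a = b * c ∧ r < f b ∧ r < g c := by
  by_contra! H
  refine absurd h (not_lt.mpr (Real.sSup_le ?_ hr))
  rintro v ⟨b, c, hbc, rfl⟩
  by_cases hb : r < f b
  · exact (min_le_right _ _).trans (H b c hbc hb)
  · exact (min_le_left _ _).trans (not_lt.mp hb)

theorem subK_eq_of_genBi (hreg : RegularAG S) (k : ℝ) (hk1 : k < 1)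
    (f : S → ℝ) (hf : IsFuzzy f) (hb : FuzzyGenBiIdealK k f) :
    subK k f = prodK k (prodK k f (fuzzyOne S)) f := by
  have hf1 : ∀ x, f x ≤ 1 := fun x => (hf x).2
  have hK : 0 < (1 - k) / 2 := by linarith
  funext a
  apply le_antisymm
  · obtain ⟨x, hx⟩ := hreg a
    have h1 := le_fuzzyProd (g := fuzzyOne S) hf1 a x
    have h1' : f a ≤ fuzzyProd f (fuzzyOne S) (a * x) :=
      (le_min le_rfl (hf1 a)).trans h1
    have hle : ∀ y, prodK k f (fuzzyOne S) y ≤ 1 := by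
      intro y
      refine (min_le_left _ _).trans (Real.sSup_le ?_ zero_le_one)
      rintro v ⟨b, c, _, rfl⟩
      exact (min_le_left _ _).trans (hf1 b)
    have h2 := le_fuzzyProd (g := f) hle (a * x) a
    rw [← hx] at h2
    refine le_min (le_trans (le_min (le_min ?_ (min_le_right _ _)) (min_le_left _ _)) h2)
      (min_le_right _ _)
    exact (min_le_left _ _).trans h1'
  · refine le_min ?_ (min_le_right _ _)
    by_contra! H
    obtain ⟨H1, H2⟩ := lt_min_iff.mp H
    obtain ⟨b, c, rfl, hb1, hc⟩ := fuzzyProd_lt (hf a).1 H1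
    obtain ⟨hb2, -⟩ := lt_min_iff.mp hb1
    obtain ⟨x, y, rfl, hx, -⟩ := fuzzyProd_lt (hf _).1 hb2
    exact absurd (hb x y c) (not_le.mpr (lt_min (lt_min hx hc) H2))

theorem genBi_of_quasi (hS : LeftInvertive S) (e : S) (he : ∀ x : S, e * x = x)
    (hwr : WeaklyRegular S) (k : ℝ) (f : S → ℝ) (hf : IsFuzzy f)
    (hq : FuzzyQuasiIdealK k f) : FuzzyGenBiIdealK k f := by
  intro x y z
  have hf1 : ∀ x, f x ≤ 1 := fun x => (hf x).2
  refine le_trans (min_le_min_right _ (min_le_min ?_ ?_)) (hq (x * y * z))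
  · obtain ⟨w, hw⟩ := ag_left_right hS e he hwr (z * y) x
    rw [hS x y z, hw]
    exact (le_min le_rfl (hf1 x)).trans (le_fuzzyProd (g := fuzzyOne S) hf1 x w)
  · exact (le_min (hf1 z) le_rfl).trans
      (le_fuzzyProd (f := fuzzyOne S) (fun _ => le_rfl) (x * y) z)

end Helpers

/-- for a weakly regular AG-groupoid `S` with left identity, the following
are equivalent: (i) `S` is regular; (ii) `f_k = (f ∘_k 1) ∘_k f` for every
`(∈,∈∨q_k)`-fuzzy generalized bi-ideal; (iii) the same for every `(∈,∈∨q_k)`-fuzzy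
bi-ideal; (iv) the same for every `(∈,∈∨q_k)`-fuzzy quasi-ideal. -/
theorem regular_tfae_subK_eq {S : Type*} [Mul S] (hS : LeftInvertive S)
    (k : ℝ) (hk0 : 0 ≤ k) (hk1 : k < 1)
    (e : S) (he : ∀ x : S, e * x = x) (hwr : WeaklyRegular S) :
    (RegularAG S ↔
      ∀ f : S → ℝ, IsFuzzy f → FuzzyGenBiIdealK k f →
        subK k f = prodK k (prodK k f (fuzzyOne S)) f) ∧
    (RegularAG S ↔
      ∀ f : S → ℝ, IsFuzzy f → FuzzyBiIdealK k f →
        subK k f = prodK k (prodK k f (fuzzyOne S)) f) ∧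
    (RegularAG S ↔
      ∀ f : S → ℝ, IsFuzzy f → FuzzyQuasiIdealK k f →
        subK k f = prodK k (prodK k f (fuzzyOne S)) f) := by
  have hreg := ag_regular hS e he hwr
  refine ⟨⟨fun _ f hf hb => subK_eq_of_genBi hreg k hk1 f hf hb, fun _ => hreg⟩,
    ⟨fun _ f hf hb => subK_eq_of_genBi hreg k hk1 f hf hb.2, fun _ => hreg⟩,
    ⟨fun _ f hf hq => subK_eq_of_genBi hreg k hk1 f hf
      (genBi_of_quasi hS e he hwr k f hf hq), fun _ => hreg⟩⟩
end

section
/- Let k ∈ [0,1) and let S be a weakly regular AG-groupoid with a left identity e. Then the following conditions are equivalent: (i) S is both regular and intra-regular; (ii) f ∘_k f = f_k for every (∈,∈∨q_k)-fuzzy quasi-ideal f of S; (iii) f ∘_k f = f_k for every (∈,∈∨q_k)-fuzzy bi-ideal f of S; (iv) f ∘_k g ≥ f ∧_k g for all (∈,∈∨q_k)-fuzzy quasi-ideals f and g of S; (v) f ∘_k g ≥ f ∧_k g for every (∈,∈∨q_k)-fuzzy quasi-ideal f and every (∈,∈∨q_k)-fuzzy bi-ideal g of S; (vi) f ∘_k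 g ≥ f ∧_k g for all (∈,∈∨q_k)-fuzzy bi-ideals f and g of S. -/
namespace AGAux

theorem medial {S : Type*} [Mul S] (hS : LeftInvertive S) (a b c d : S) :
    a * b * (c * d) = a * c * (b * d) := by
  rw [hS a b (c * d), hS c d b, hS (b * d) c a]

theorem lcomm {S : Type*} [Mul S] (hS : LeftInvertive S) (e : S) (he : ∀ x : S, e * x = x)
    (a b c : S) : a * (b * c) = b * (a * c) := by
  have h := medial hS e a b c
  rwa [he, he] at h

theorem paramedial {S : Type*} [Mul S] (hS : LeftInvertive S) (e : S)
    (he : ∀ x : S, e * x = x) (a b c d : S) : a * b * (c * d) = d * c * (b * a) := by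
  calc a * b * (c * d) = c * (a * b * d) := lcomm hS e he _ _ _
    _ = c * (d * b * a) := by rw [hS a b d]
    _ = d * b * (c * a) := lcomm hS e he _ _ _
    _ = d * c * (b * a) := medial hS _ _ _ _

theorem sq {S : Type*} [Mul S] (hS : LeftInvertive S) (hwr : WeaklyRegular S) (a : S) :
    ∃ z, a = a * a * z := by
  obtain ⟨x, y, h⟩ := hwr a
  exact ⟨x * y, by rw [← medial hS]; exact h⟩

/-- Every left multiple of `x` is a right multiple of `x`. -/
theorem left_to_right {S : Type*} [Mul S] (hS : LeftInvertive S) (e : S)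
    (he : ∀ x : S, e * x = x) (hwr : WeaklyRegular S) (y x : S) : ∃ w, y * x = x * w := by
  obtain ⟨u, hu⟩ := sq hS hwr x
  refine ⟨u * y * x, ?_⟩
  calc y * x = y * (x * x * u) := by rw [← hu]
    _ = x * x * (y * u) := lcomm hS e he _ _ _
    _ = u * y * (x * x) := paramedial hS e he _ _ _ _
    _ = x * (u * y * x) := lcomm hS e he _ _ _

theorem regular {S : Type*} [Mul S] (hS : LeftInvertive S) (e : S)
    (he : ∀ x : S, e * x = x) (hwr : WeaklyRegular S) : RegularAG S := by
  intro a
  obtain ⟨z, hz⟩ := sq hS hwr a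
  obtain ⟨w, hw⟩ := left_to_right hS e he hwr z a
  exact ⟨w, by rw [← hw, ← hS a a z]; exact hz⟩

theorem intra {S : Type*} [Mul S] (hS : LeftInvertive S) (e : S)
    (he : ∀ x : S, e * x = x) (hwr : WeaklyRegular S) : IntraRegularAG S := by
  intro a
  obtain ⟨z, hz⟩ := sq hS hwr a
  exact ⟨e, z, by rw [he]; exact hz⟩

theorem factor {S : Type*} [Mul S] (hS : LeftInvertive S) (e : S)
    (he : ∀ x : S, e * x = x) (hwr : WeaklyRegular S) (a : S) :
    ∃ u v, a = (a * u * a) * (a * v * a) := by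
  obtain ⟨z, hz⟩ := sq hS hwr a
  obtain ⟨w, hw⟩ := left_to_right hS e he hwr (z * z * z) (a * a)
  refine ⟨e, w, ?_⟩
  have hs : a * a = a * a * (a * a) * (z * z) := by
    rw [← medial hS (a * a) z, ← hz]
  calc a = a * a * z := hz
    _ = a * a * (a * a) * (z * z) * z := by rw [← hs]
    _ = z * (z * z) * (a * a * (a * a)) := hS _ _ _
    _ = a * a * (a * a) * (z * z * z) := paramedial hS e he _ _ _ _
    _ = z * z * z * (a * a) * (a * a) := hS _ _ _
    _ = a * a * w * (a * a) := by rw [hw]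
    _ = a * a * (e * w) * (a * a) := by rw [he]
    _ = a * e * (a * w) * (a * a) := by rw [medial hS a a]
    _ = (a * e * a) * (a * w * a) := medial hS _ _ _ _

theorem le_prod {S : Type*} [Mul S] {f g : S → ℝ} (hf : ∀ x, f x ≤ 1) (b c : S) :
    min (f b) (g c) ≤ fuzzyProd f g (b * c) := by
  apply le_csSup
  · refine ⟨1, ?_⟩
    rintro v ⟨b, c, -, rfl⟩
    exact (min_le_left _ _).trans (hf b)
  · exact ⟨b, c, rfl, rfl⟩

theorem quasi_bi {S : Type*} [Mul S] (hS : LeftInvertive S) (e : S)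
    (he : ∀ x : S, e * x = x) (hwr : WeaklyRegular S) {k : ℝ} {f : S → ℝ} (hf : IsFuzzy f)
    (hq : FuzzyQuasiIdealK k f) : FuzzyBiIdealK k f := by
  have hr : ∀ x y, f x ≤ fuzzyProd f (fuzzyOne S) (x * y) := fun x y =>
    (le_min le_rfl (hf x).2).trans (le_prod (g := fuzzyOne S) (fun x => (hf x).2) x y)
  have hl : ∀ x y, f y ≤ fuzzyProd (fuzzyOne S) f (x * y) := fun x y =>
    (le_min (hf y).2 le_rfl).trans (le_prod (f := fuzzyOne S) (fun _ => le_rfl) x y)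
  refine ⟨fun x y => ?_, fun x y z => ?_⟩
  · exact (min_le_min_right _ (min_le_min (hr x y) (hl x y))).trans (hq _)
  · refine (min_le_min_right _ (min_le_min ?_ (hl (x * y) z))).trans (hq _)
    obtain ⟨w, hw⟩ := left_to_right hS e he hwr (z * y) x
    rw [hS x y z, hw]
    exact hr x w

theorem bi_le {S : Type*} [Mul S] (hS : LeftInvertive S) (e : S)
    (he : ∀ x : S, e * x = x) (hwr : WeaklyRegular S) {k : ℝ} {f g : S → ℝ} (hf : IsFuzzy f)
    (hbf : FuzzyBiIdealK k f) (hbg : FuzzyBiIdealK k g) (a : S) :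
    andK k f g a ≤ prodK k f g a := by
  obtain ⟨u, v, h⟩ := factor hS e he hwr a
  have h1 := hbf.2 a u a
  have h2 := hbg.2 a v a
  rw [min_self] at h1 h2
  have h3 := le_prod (f := f) (g := g) (fun x => (hf x).2) (a * u * a) (a * v * a)
  rw [← h] at h3
  refine le_min (le_trans (le_min ?_ ?_) h3) (min_le_right _ _)
  · exact (min_le_min_right _ (min_le_left _ _)).trans h1
  · exact (min_le_min_right _ (min_le_right _ _)).trans h2

theorem bi_eq {S : Type*} [Mul S] (hS : LeftInvertive S) (e : S)
    (he : ∀ x : S, e * x = x) (hwr : WeaklyRegular S) {k : ℝ} {f : S → ℝ} (hf : IsFuzzy f)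
    (hbf : FuzzyBiIdealK k f) : prodK k f f = subK k f := by
  funext a
  apply le_antisymm
  · refine le_min ?_ (min_le_right _ _)
    rcases le_or_gt ((1 - k) / 2) (f a) with h | h
    · exact (min_le_right _ _).trans h
    · refine (min_le_left _ _).trans (Real.sSup_le ?_ (hf a).1)
      rintro v ⟨b, c, rfl, rfl⟩
      rcases min_le_iff.1 (hbf.1 b c) with h' | h'
      · exact h'
      · exact absurd h' (not_le.2 h)
  · have := bi_le hS e he hwr hf hbf hbf a
    simpa [andK, subK] using this

end AGAux

/-- for a weakly regular AG-groupoid `S` with left identity, the following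
are equivalent: (i) `S` is regular and intra-regular; (ii) `f ∘_k f = f_k` for every
`(∈,∈∨q_k)`-fuzzy quasi-ideal `f`; (iii) `f ∘_k f = f_k` for every
`(∈,∈∨q_k)`-fuzzy bi-ideal `f`; (iv) `f ∘_k g ≥ f ∧_k g` for all
`(∈,∈∨q_k)`-fuzzy quasi-ideals `f, g`; (v) `f ∘_k g ≥ f ∧_k g` for every
`(∈,∈∨q_k)`-fuzzy quasi-ideal `f` and every `(∈,∈∨q_k)`-fuzzy bi-ideal `g`;
(vi) `f ∘_k g ≥ f ∧_k g` for all `(∈,∈∨q_k)`-fuzzy bi-ideals `f, g`. -/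
theorem regular_and_intraRegular_tfae {S : Type*} [Mul S] (hS : LeftInvertive S)
    (k : ℝ) (hk0 : 0 ≤ k) (hk1 : k < 1)
    (e : S) (he : ∀ x : S, e * x = x) (hwr : WeaklyRegular S) :
    ((RegularAG S ∧ IntraRegularAG S) ↔
      ∀ f : S → ℝ, IsFuzzy f → FuzzyQuasiIdealK k f → prodK k f f = subK k f) ∧
    ((RegularAG S ∧ IntraRegularAG S) ↔
      ∀ f : S → ℝ, IsFuzzy f → FuzzyBiIdealK k f → prodK k f f = subK k f) ∧
    ((RegularAG S ∧ IntraRegularAG S) ↔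
      ∀ f g : S → ℝ, IsFuzzy f → IsFuzzy g →
        FuzzyQuasiIdealK k f → FuzzyQuasiIdealK k g →
        ∀ a : S, andK k f g a ≤ prodK k f g a) ∧
    ((RegularAG S ∧ IntraRegularAG S) ↔
      ∀ f g : S → ℝ, IsFuzzy f → IsFuzzy g →
        FuzzyQuasiIdealK k f → FuzzyBiIdealK k g →
        ∀ a : S, andK k f g a ≤ prodK k f g a) ∧
    ((RegularAG S ∧ IntraRegularAG S) ↔
      ∀ f g : S → ℝ, IsFuzzy f → IsFuzzy g →
        FuzzyBiIdealK k f → FuzzyBiIdealK k g →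
        ∀ a : S, andK k f g a ≤ prodK k f g a) := by
  have h0 : RegularAG S ∧ IntraRegularAG S :=
    ⟨AGAux.regular hS e he hwr, AGAux.intra hS e he hwr⟩
  have q : ∀ {f : S → ℝ}, IsFuzzy f → FuzzyQuasiIdealK k f → FuzzyBiIdealK k f :=
    fun hf hq => AGAux.quasi_bi hS e he hwr hf hq
  refine ⟨⟨fun _ f hf hq => AGAux.bi_eq hS e he hwr hf (q hf hq), fun _ => h0⟩,
    ⟨fun _ f hf hb => AGAux.bi_eq hS e he hwr hf hb, fun _ => h0⟩,
    ⟨fun _ f g hf hg h1 h2 => AGAux.bi_le hS e he hwr hf (q hf h1) (q hg h2), fun _ => h0⟩,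
    ⟨fun _ f g hf hg h1 h2 => AGAux.bi_le hS e he hwr hf (q hf h1) h2, fun _ => h0⟩,
    ⟨fun _ f g hf hg h1 h2 => AGAux.bi_le hS e he hwr hf h1 h2, fun _ => h0⟩⟩
end
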